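/- If every n-vertex graph of a monotone graph class C has a balanced separator of order at most C₀·n^{1−δ} (with C₀ > 0, 0 < δ ≤ 1), then there exist constants c₁, c₂ depending only on C₀ and δ such that for every integer r ≥ 0, every depth-r minor of a graph in C has average degree at most c₁·(r+1)^{1/δ}·((1/δ)·log(r+3))^{c₂/δ}. -/

import Mathlib

open Finset

/-- The external neighborhood of a vertex set `S`. -/
def nbrSet {V : Type*} (G : SimpleGraph V) (S : Set V) : Set V :=
  {v | v ∉ S ∧ ∃ u ∈ S, G.Adj u v}

/-- `(A, B)` is a separator of `G`: `A ∪ B = V` and no edge joins `A \ B` to `B \ A`. -/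
def IsSeparator {V : Type*} [Fintype V] [DecidableEq V] (G : SimpleGraph V) (A B : Finset V) : Prop :=
  A ∪ B = Finset.univ ∧ ∀ a ∈ A \ B, ∀ b ∈ B \ A, ¬ G.Adj a b

/-- A balanced separator: moreover `|A \ B|` and `|B \ A|` are at most `(2/3)|V|`. -/
def IsBalancedSeparator {V : Type*} [Fintype V] [DecidableEq V] (G : SimpleGraph V) (A B : Finset V) : Prop :=
  IsSeparator G A B ∧ 3 * (A \ B).card ≤ 2 * Fintype.card V ∧
    3 * (B \ A).card ≤ 2 * Fintype.card V

/-- `G` has a tree decomposition of width at most `k`. -/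
def HasTreeDecompOfWidth {V : Type*} (G : SimpleGraph V) (k : ℕ) : Prop :=
  ∃ (ι : Type) (T : SimpleGraph ι) (β : ι → Finset V),
    T.IsTree ∧
    (∀ v, ∃ i, v ∈ β i) ∧
    (∀ u v, G.Adj u v → ∃ i, u ∈ β i ∧ v ∈ β i) ∧
    (∀ v, (SimpleGraph.induce {i | v ∈ β i} T).Connected) ∧
    (∀ i, (β i).card ≤ k + 1)

/-- The tree-width of `G`. -/
noncomputable def treewidth {V : Type*} (G : SimpleGraph V) : ℕ :=
  sInf {k | HasTreeDecompOfWidth G k}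

/-- A realization of `H` as a depth-`r` minor of `G`: pairwise disjoint branch sets
`S w ⊆ V(G)`, each connected of radius at most `r` (witnessed by a center and walks
staying inside the branch set), such that every edge of `H` is realized by an edge
of `G` between the corresponding branch sets. -/
structure DepthMinorRealization {V W : Type*} (r : ℕ) (G : SimpleGraph V)
    (H : SimpleGraph W) where
  S : W → Set V
  disj : ∀ w w', w ≠ w' → Disjoint (S w) (S w')
  center : W → V
  center_mem : ∀ w, center w ∈ S w
  radius : ∀ w, ∀ v ∈ S w, ∃ p : G.Walk (center w) v, p.length ≤ r ∧
    ∀ x ∈ p.support, x ∈ S w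
  adj : ∀ w w', H.Adj w w' → ∃ a ∈ S w, ∃ b ∈ S w', G.Adj a b

/-- The average degree `2|E|/|V|` of a finite graph. -/
noncomputable def avgDeg {W : Type*} [Fintype W] (H : SimpleGraph W) : ℝ :=
  (∑ w : W, ({w' | H.Adj w w'}.ncard : ℝ)) / (Fintype.card W : ℝ)

/-- `v` is strongly `r`-reachable from `u` with respect to the linear order `L`. -/
def StronglyReachable {V : Type*} (G : SimpleGraph V) (L : LinearOrder V) (r : ℕ)
    (u v : V) : Prop :=
  L.le v u ∧ ∃ p : G.Walk u v, p.IsPath ∧ p.length ≤ r ∧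
    ∀ w ∈ p.support, w ≠ u → w ≠ v → L.lt u w

/-- `v` is weakly `r`-reachable from `u` with respect to the linear order `L`. -/
def WeaklyReachable {V : Type*} (G : SimpleGraph V) (L : LinearOrder V) (r : ℕ)
    (u v : V) : Prop :=
  L.le v u ∧ ∃ p : G.Walk u v, p.IsPath ∧ p.length ≤ r ∧
    ∀ w ∈ p.support, L.le v w

/-- The strong `r`-coloring number of `G`. -/
noncomputable def colNum {V : Type*} [Fintype V] (G : SimpleGraph V) (r : ℕ) : ℕ :=
  sInf {k | ∃ L : LinearOrder V, ∀ u, {v | StronglyReachable G L r u v}.ncard ≤ k}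

/-- The weak `r`-coloring number of `G`. -/
noncomputable def wcolNum {V : Type*} [Fintype V] (G : SimpleGraph V) (r : ℕ) : ℕ :=
  sInf {k | ∃ L : LinearOrder V, ∀ u, {v | WeaklyReachable G L r u v}.ncard ≤ k}

/-- `H` is (isomorphic to) a subgraph of `G`. -/
def IsSubgraphOf {W V : Type*} (H : SimpleGraph W) (G : SimpleGraph V) : Prop :=
  ∃ f : W ↪ V, ∀ a b, H.Adj a b → G.Adj (f a) (f b)

set_option maxHeartbeats 1000000 in
open Classical in
/-- Division lemma. -/
theorem division_aux {V : Type} (G : SimpleGraph V) (C₀ δ s M : ℝ)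
    (hC₀ : 0 < C₀) (hδ0 : 0 < δ) (hδ1 : δ ≤ 1) (hs : 0 < s) (hM : 0 < M)
    (hsM : 3 * M ≤ s ^ δ) (hsC : 12 * C₀ ≤ s ^ δ)
    (hMC : 2 * C₀ ≤ M * ((4/3 : ℝ) ^ δ - 1))
    (sep : ∀ X : Finset V, ∃ A B : Finset V, A ∪ B = X ∧
      (∀ a ∈ A \ B, ∀ b ∈ B \ A, ¬ G.Adj a b) ∧ 3 * (A \ B).card ≤ 2 * X.card ∧
      3 * (B \ A).card ≤ 2 * X.card ∧ ((A ∩ B).card : ℝ) ≤ C₀ * (X.card : ℝ) ^ (1 - δ)) :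
    ∀ (n : ℕ) (X : Finset V), X.card = n → s / 3 ≤ (n : ℝ) →
      ∃ (ι : Type) (_ : Fintype ι) (P : ι → Finset V),
        (∀ i, ((P i).card : ℝ) ≤ s) ∧ (∀ v ∈ X, ∃ i, v ∈ P i) ∧ (∀ i, P i ⊆ X) ∧
        (∀ u ∈ X, ∀ v ∈ X, G.Adj u v → ∃ i, u ∈ P i ∧ v ∈ P i) ∧
        (∑ i, ((P i).card : ℝ)) ≤ n + 3 * M * n * s ^ (-δ) - M * (n : ℝ) ^ (1 - δ) := by
  intro n
  induction n using Nat.strong_induction_on with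
  | _ n ih =>
  intro X hX hn
  have hn0 : (0 : ℝ) < n := by linarith
  have hsd : 0 < s ^ δ := Real.rpow_pos_of_pos hs _
  have hsd' : 0 < s ^ (-δ) := Real.rpow_pos_of_pos hs _
  have hprod : s ^ δ * s ^ (-δ) = 1 := by
    rw [← Real.rpow_add hs]; simp
  have hsplit : ∀ x : ℝ, 0 < x → x ^ (1 - δ) = x * x ^ (-δ) := by
    intro x hx
    rw [sub_eq_add_neg, Real.rpow_add hx, Real.rpow_one]
  by_cases hle : (n : ℝ) ≤ s
  · refine ⟨Unit, inferInstance, fun _ => X, ?_, ?_, ?_, ?_, ?_⟩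
    · intro _; rw [hX]; exact hle
    · intro v hv; exact ⟨(), hv⟩
    · intro _; exact subset_rfl
    · intro u hu v hv _; exact ⟨(), hu, hv⟩
    · simp only [Finset.univ_unique, Finset.sum_const, Finset.card_singleton, one_smul, hX]
      have h1 : (n : ℝ) ^ (-δ) ≤ (s / 3) ^ (-δ) :=
        Real.rpow_le_rpow_of_nonpos (by positivity) hn (by linarith)
      have h2 : (s / 3) ^ (-δ) ≤ 3 * s ^ (-δ) := by
        rw [Real.div_rpow hs.le (by norm_num), Real.rpow_neg (by norm_num : (0:ℝ) ≤ 3), div_inv_eq_mul,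
          mul_comm]
        have : (3 : ℝ) ^ δ ≤ 3 ^ (1 : ℝ) := Real.rpow_le_rpow_of_exponent_le (by norm_num) hδ1
        rw [Real.rpow_one] at this
        gcongr
      rw [hsplit _ hn0]
      have : M * ((n : ℝ) * (n : ℝ) ^ (-δ)) ≤ M * (n * (3 * s ^ (-δ))) := by
        gcongr; exact h1.trans h2
      linarith
  · push Not at hle
    obtain ⟨A, B, hAB, hedge, hA, hB, hz⟩ := sep X
    rw [hX] at hA hB hz
    have e1 : (A \ B).card + B.card = n := by
      rw [← hX, ← hAB, Finset.card_sdiff_add_card]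
    have e2 : (B \ A).card + A.card = n := by
      rw [← hX, ← hAB, Finset.union_comm, Finset.card_sdiff_add_card]
    have e3 : A.card + B.card = n + (A ∩ B).card := by
      rw [← hX, ← hAB, Finset.card_union_add_card_inter]
    have e1' : ((A \ B).card : ℝ) + B.card = n := by exact_mod_cast e1
    have e2' : ((B \ A).card : ℝ) + A.card = n := by exact_mod_cast e2
    have e3' : (A.card : ℝ) + B.card = n + (A ∩ B).card := by exact_mod_cast e3
    have hA' : 3 * ((A \ B).card : ℝ) ≤ 2 * n := by exact_mod_cast hA
    have hB' : 3 * ((B \ A).card : ℝ) ≤ 2 * n := by exact_mod_cast hB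
    set a : ℝ := (A.card : ℝ) with ha
    set b : ℝ := (B.card : ℝ) with hb
    set z : ℝ := ((A ∩ B).card : ℝ) with hzdef
    have hz0 : 0 ≤ z := by positivity
    have hnd : s ^ δ ≤ (n : ℝ) ^ δ := Real.rpow_le_rpow hs.le hle.le hδ0.le
    have hnp : (n : ℝ) ^ δ * (n : ℝ) ^ (-δ) = 1 := by rw [← Real.rpow_add hn0]; simp
    have hnd' : 0 < (n : ℝ) ^ (-δ) := Real.rpow_pos_of_pos hn0 _
    have hz12 : z ≤ n / 12 := by
      have h1 : 12 * C₀ * (n : ℝ) ^ (-δ) ≤ 1 := by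
        rw [← hnp]; gcongr; linarith
      rw [hsplit _ hn0] at hz
      nlinarith
    have ha3 : n / 3 ≤ a := by linarith
    have hb3 : n / 3 ≤ b := by linarith
    have ha4 : a ≤ 3 * n / 4 := by linarith
    have hb4 : b ≤ 3 * n / 4 := by linarith
    have haN : A.card < n := by
      have : (A.card : ℝ) < n := by linarith
      exact_mod_cast this
    have hbN : B.card < n := by
      have : (B.card : ℝ) < n := by linarith
      exact_mod_cast this
    obtain ⟨ι₁, _, P₁, p1, p2, p3, p4, p5⟩ := ih A.card haN A rfl (by linarith)
    obtain ⟨ι₂, _, P₂, q1, q2, q3, q4, q5⟩ := ih B.card hbN B rfl (by linarith)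
    refine ⟨ι₁ ⊕ ι₂, inferInstance, Sum.elim P₁ P₂, ?_, ?_, ?_, ?_, ?_⟩
    · rintro (i | i)
      · exact p1 i
      · exact q1 i
    · intro v hv
      rw [← hAB, Finset.mem_union] at hv
      rcases hv with hv | hv
      · obtain ⟨i, hi⟩ := p2 v hv; exact ⟨Sum.inl i, hi⟩
      · obtain ⟨i, hi⟩ := q2 v hv; exact ⟨Sum.inr i, hi⟩
    · rw [← hAB]
      rintro (i | i)
      · exact (p3 i).trans Finset.subset_union_left
      · exact (q3 i).trans Finset.subset_union_right
    · intro u hu v hv huv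
      have key : (u ∈ A ∧ v ∈ A) ∨ (u ∈ B ∧ v ∈ B) := by
        rw [← hAB, Finset.mem_union] at hu hv
        by_contra hcon
        by_cases huA : u ∈ A
        · have hvA : v ∉ A := fun h => hcon (Or.inl ⟨huA, h⟩)
          have hvB : v ∈ B := by tauto
          have huB : u ∉ B := fun h => hcon (Or.inr ⟨h, hvB⟩)
          exact hedge u (by simp [huA, huB]) v (by simp [hvA, hvB]) huv
        · have huB : u ∈ B := by tauto
          have hvB : v ∉ B := fun h => hcon (Or.inr ⟨huB, h⟩)
          have hvA : v ∈ A := by tauto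
          exact hedge v (by simp [hvA, hvB]) u (by simp [huA, huB]) huv.symm
      rcases key with ⟨h1, h2⟩ | ⟨h1, h2⟩
      · obtain ⟨i, hi⟩ := p4 u h1 v h2 huv; exact ⟨Sum.inl i, hi⟩
      · obtain ⟨i, hi⟩ := q4 u h1 v h2 huv; exact ⟨Sum.inr i, hi⟩
    · rw [Fintype.sum_sum_type]
      simp only [Sum.elim_inl, Sum.elim_inr]
      have ha0 : 0 < a := by linarith
      have hb0 : 0 < b := by linarith
      set t : ℝ := (4/3 : ℝ) ^ δ with ht
      have ht34 : (3 * n / 4 : ℝ) ^ (-δ) = t * (n : ℝ) ^ (-δ) := by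
        rw [show (3 * n / 4 : ℝ) = (4/3)⁻¹ * n by ring, Real.mul_rpow (by norm_num) hn0.le,
          Real.inv_rpow (by norm_num), Real.rpow_neg (by norm_num), inv_inv]
      have hapow : a * (t * (n : ℝ) ^ (-δ)) ≤ a ^ (1 - δ) := by
        rw [hsplit a ha0, ← ht34]
        apply mul_le_mul_of_nonneg_left _ ha0.le
        exact Real.rpow_le_rpow_of_nonpos ha0 ha4 (neg_nonpos.mpr hδ0.le)
      have hbpow : b * (t * (n : ℝ) ^ (-δ)) ≤ b ^ (1 - δ) := by
        rw [hsplit b hb0, ← ht34]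
        apply mul_le_mul_of_nonneg_left _ hb0.le
        exact Real.rpow_le_rpow_of_nonpos hb0 hb4 (neg_nonpos.mpr hδ0.le)
      have hsum : n * (t * (n : ℝ) ^ (-δ)) ≤ a ^ (1 - δ) + b ^ (1 - δ) := by
        have h0 : 0 ≤ t * (n : ℝ) ^ (-δ) := by positivity
        have h1 : (n : ℝ) ≤ a + b := by linarith
        have h2 := mul_le_mul_of_nonneg_right h1 h0
        rw [add_mul] at h2
        linarith
      have hMs : 3 * M * s ^ (-δ) ≤ 1 := by rw [← hprod]; gcongr
      have hzz : z + 3 * M * z * s ^ (-δ) ≤ 2 * z := by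
        have := mul_le_mul_of_nonneg_right hMs hz0
        linarith
      rw [hsplit _ hn0] at hz ⊢
      have hfin : 2 * z + M * (n * (n : ℝ) ^ (-δ)) ≤ M * (a ^ (1 - δ) + b ^ (1 - δ)) := by
        have h1 : M * (n * (t * (n : ℝ) ^ (-δ))) ≤ M * (a ^ (1 - δ) + b ^ (1 - δ)) := by gcongr
        have h2 : 2 * C₀ * (n * (n : ℝ) ^ (-δ)) ≤ M * (t - 1) * (n * (n : ℝ) ^ (-δ)) := by gcongr
        linarith
      have : (3 * M * a * s ^ (-δ)) + 3 * M * b * s ^ (-δ) = 3 * M * n * s ^ (-δ) + 3 * M * z * s ^ (-δ) := by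
        have : a = n + z - b := by linarith
        rw [this]; ring
      linarith

open Classical in
/-- Connected sets touch few pieces. -/
theorem touch_count {V ι : Type} [Fintype ι] (G : SimpleGraph V) (P : ι → Finset V)
    (T : Finset V) (c : V) (hc : c ∈ T)
    (hconn : ∀ v ∈ T, ∃ p : G.Walk c v, ∀ x ∈ p.support, x ∈ T)
    (hedge : ∀ u ∈ T, ∀ v ∈ T, G.Adj u v → ∃ i, u ∈ P i ∧ v ∈ P i) :
    (Finset.univ.filter (fun i => ∃ v ∈ T, v ∈ P i)).card + T.card ≤
      1 + ∑ v ∈ T, (Finset.univ.filter (fun i => v ∈ P i)).card := by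
  let good : Finset V → Prop := fun Y => c ∈ Y ∧
    (Finset.univ.filter (fun i => ∃ v ∈ Y, v ∈ P i)).card + Y.card ≤
      1 + ∑ v ∈ Y, (Finset.univ.filter (fun i => v ∈ P i)).card
  have hne : (T.powerset.filter good).Nonempty := by
    refine ⟨{c}, ?_⟩
    simp only [Finset.mem_filter, Finset.mem_powerset, Finset.singleton_subset_iff, good]
    refine ⟨hc, by simp, ?_⟩
    simp [add_comm]
  obtain ⟨Y, hY, hmax⟩ := Finset.exists_max_image _ Finset.card hne
  simp only [Finset.mem_filter, Finset.mem_powerset] at hY hmax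
  obtain ⟨hYT, hcY, hYc⟩ := hY
  by_cases hEq : Y = T
  · rw [hEq] at hYc; exact hYc
  exfalso
  obtain ⟨v, hvT, hvY⟩ : ∃ v ∈ T, v ∉ Y := by
    by_contra hcon
    push Not at hcon
    exact hEq (Finset.Subset.antisymm hYT hcon)
  obtain ⟨p, hp⟩ := hconn v hvT
  obtain ⟨d, hd, hd1, hd2⟩ := p.exists_boundary_dart (Y : Set V) (by simpa using hcY) (by simpa using hvY)
  have hx : d.snd ∈ T := hp _ (p.dart_snd_mem_support_of_mem_darts hd)
  have hu : d.fst ∈ T := hp _ (p.dart_fst_mem_support_of_mem_darts hd)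
  have hd2' : d.snd ∉ Y := by simpa using hd2
  have hd1' : d.fst ∈ Y := by simpa using hd1
  obtain ⟨i₀, hi1, hi2⟩ := hedge _ hu _ hx d.adj
  have hcard : (Finset.univ.filter (fun i => ∃ v ∈ insert d.snd Y, v ∈ P i)).card + 1 ≤
      (Finset.univ.filter (fun i => ∃ v ∈ Y, v ∈ P i)).card +
        (Finset.univ.filter (fun i => d.snd ∈ P i)).card := by
    rw [← Finset.card_union_add_card_inter]
    apply Nat.add_le_add
    · apply Finset.card_le_card
      intro i hi
      simp only [Finset.mem_filter, Finset.mem_univ, true_and, Finset.mem_insert, Finset.mem_union] at hi ⊢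
      obtain ⟨v, rfl | hv, hvi⟩ := hi
      · exact Or.inr hvi
      · exact Or.inl ⟨v, hv, hvi⟩
    · apply Finset.card_pos.mpr
      exact ⟨i₀, by simp; exact ⟨⟨_, hd1', hi1⟩, hi2⟩⟩
  have := hmax (insert d.snd Y) ⟨Finset.insert_subset hx hYT, by simp [hcY], by
    rw [Finset.sum_insert hd2', Finset.card_insert_of_notMem hd2']; omega⟩
  rw [Finset.card_insert_of_notMem hd2'] at this
  omega

open Classical in
/-- Greedy hitting sets. -/
theorem hitting_aux {Ω α : Type} (R : Finset Ω) (E : Finset α) (hE : E.Nonempty) (U : Ω → α → Prop)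
    (γ : ℝ) (hγ1 : γ ≤ 1)
    (hU : ∀ g ∈ R, γ * E.card ≤ ((E.filter (fun e => U g e)).card : ℝ)) (m : ℕ) :
    ∃ F : Finset α, F ⊆ E ∧ F.card ≤ m ∧
      ((R.filter (fun g => ∀ e ∈ F, ¬ U g e)).card : ℝ) ≤ (1 - γ) ^ m * R.card := by
  induction m with
  | zero => exact ⟨∅, by simp, by simp, by simp⟩
  | succ m ih =>
    obtain ⟨F, hFE, hFm, hF⟩ := ih
    set R' := R.filter (fun g => ∀ e ∈ F, ¬ U g e) with hR'
    have havg : ∃ e ∈ E, γ * R'.card ≤ ((R'.filter (fun g => U g e)).card : ℝ) := by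
      by_contra hcon
      push Not at hcon
      have h1 : ∑ e ∈ E, ((R'.filter (fun g => U g e)).card : ℝ) < ∑ e ∈ E, γ * R'.card :=
        Finset.sum_lt_sum_of_nonempty hE hcon
      have h2 : ∑ e ∈ E, (R'.filter (fun g => U g e)).card =
          ∑ g ∈ R', (E.filter (fun e => U g e)).card := by
        have := Finset.sum_card_bipartiteAbove_eq_sum_card_bipartiteBelow (s := R') (t := E) (r := U)
        simp only [Finset.bipartiteAbove, Finset.bipartiteBelow] at this
        exact this.symm
      have h3 : ∑ g ∈ R', (γ * E.card) ≤ ∑ g ∈ R', ((E.filter (fun e => U g e)).card : ℝ) :=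
        Finset.sum_le_sum (fun g hg => hU g (Finset.mem_of_mem_filter g hg))
      have h2' : ∑ e ∈ E, ((R'.filter (fun g => U g e)).card : ℝ) =
          ∑ g ∈ R', ((E.filter (fun e => U g e)).card : ℝ) := by exact_mod_cast h2
      simp only [Finset.sum_const, nsmul_eq_mul] at h1 h3
      rw [h2'] at h1
      linarith
    obtain ⟨e, heE, he⟩ := havg
    refine ⟨insert e F, Finset.insert_subset heE hFE, (Finset.card_insert_le _ _).trans (by omega), ?_⟩
    have h4 : R.filter (fun g => ∀ e' ∈ insert e F, ¬ U g e') = R'.filter (fun g => ¬ U g e) := by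
      ext g
      simp only [hR', Finset.mem_filter, Finset.mem_insert, forall_eq_or_imp]
      tauto
    rw [h4]
    have h5 := Finset.card_filter_add_card_filter_not (s := R') (fun g => U g e)
    have h5' : ((R'.filter (fun g => U g e)).card : ℝ) + (R'.filter (fun g => ¬ U g e)).card = R'.card := by
      exact_mod_cast h5
    calc ((R'.filter (fun g => ¬ U g e)).card : ℝ) ≤ (1 - γ) * R'.card := by linarith
      _ ≤ (1 - γ) * ((1 - γ) ^ m * R.card) := by
        apply mul_le_mul_of_nonneg_left hF; linarith
      _ = _ := by ring

/-- Number of ordered adjacent pairs inside `Y`. -/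
noncomputable def eCount {W : Type} (H : SimpleGraph W) (Y : Finset W) : ℕ := by
  classical exact ((Y ×ˢ Y).filter (fun p => H.Adj p.1 p.2)).card

/-- Slowly growing potential. -/
noncomputable def phiPot (n : ℕ) : ℝ := 2 - 1 / ((Nat.log 2 n : ℝ) + 1)

theorem phiPot_ge (n : ℕ) : 1 ≤ phiPot n := by
  unfold phiPot
  have : 1 / ((Nat.log 2 n : ℝ) + 1) ≤ 1 := by
    rw [div_le_one (by positivity)]
    have : (0:ℝ) ≤ Nat.log 2 n := by positivity
    linarith
  linarith

theorem phiPot_le (n : ℕ) : phiPot n ≤ 2 := by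
  unfold phiPot
  have : 0 ≤ 1 / ((Nat.log 2 n : ℝ) + 1) := by positivity
  linarith

theorem phiPot_gap (q k : ℕ) (hk : 2 ≤ k) (hq : 2 * q ≤ k) :
    phiPot q ≤ phiPot k - 1 / ((Nat.log 2 k : ℝ) + 1) ^ 2 := by
  have h1 : Nat.log 2 q + 1 ≤ Nat.log 2 k := by
    have h2 : Nat.log 2 q ≤ Nat.log 2 (k / 2) := Nat.log_mono_right (by omega)
    have h3 := Nat.log_div_base 2 k
    have h4 : 1 ≤ Nat.log 2 k := Nat.log_pos (by norm_num) hk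
    omega
  have h1' : (Nat.log 2 q : ℝ) + 1 ≤ Nat.log 2 k := by exact_mod_cast h1
  have h0 : (0:ℝ) < (Nat.log 2 q : ℝ) + 1 := by positivity
  unfold phiPot
  set x : ℝ := (Nat.log 2 k : ℝ)
  have hx : 0 < x := by linarith
  have h5 : 1 / x ≤ 1 / ((Nat.log 2 q : ℝ) + 1) := one_div_le_one_div_of_le h0 h1'
  have h6 : 1 / (x + 1) + 1 / (x + 1) ^ 2 ≤ 1 / x := by
    have e : 1 / x - (1 / (x + 1) + 1 / (x + 1) ^ 2) = 1 / (x * (x + 1) ^ 2) := by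
      field_simp; ring
    have : 0 ≤ 1 / (x * (x + 1) ^ 2) := by positivity
    linarith
  linarith

theorem extremal_exists {W : Type} [Fintype W] [Nonempty W] (H : SimpleGraph W)
    (hpos : 0 < avgDeg H) :
    ∃ (X : Finset W) (lam : ℝ), 0 < lam ∧ X.Nonempty ∧
      (eCount H X : ℝ) = lam * X.card * phiPot X.card ∧
      (∀ Y : Finset W, (eCount H Y : ℝ) ≤ lam * Y.card * phiPot Y.card) ∧
      avgDeg H ≤ 2 * X.card := by
  classical
  let f : Finset W → ℝ := fun Y => (eCount H Y : ℝ) / (Y.card * phiPot Y.card)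
  obtain ⟨X, hX, hmax⟩ := Finset.exists_max_image
    ((Finset.univ : Finset (Finset W)).filter (fun Y => Y.Nonempty)) f
    ⟨Finset.univ, Finset.mem_filter.mpr ⟨Finset.mem_univ _, Finset.univ_nonempty⟩⟩
  simp only [Finset.mem_filter, Finset.mem_univ, true_and] at hX hmax
  have hd : ∀ Y : Finset W, Y.Nonempty → 0 < (Y.card : ℝ) * phiPot Y.card := by
    intro Y hY
    have h1 : (0 : ℝ) < Y.card := by exact_mod_cast hY.card_pos
    have h2 := phiPot_ge Y.card
    positivity
  have heu : (eCount H Finset.univ : ℝ) = avgDeg H * Fintype.card W := by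
    have hc : (Fintype.card W : ℝ) ≠ 0 := Nat.cast_ne_zero.mpr Fintype.card_ne_zero
    unfold avgDeg
    rw [div_mul_cancel₀ _ hc]
    have : eCount H Finset.univ = ∑ w : W, {w' | H.Adj w w'}.ncard := by
      unfold eCount
      rw [Finset.card_filter, Finset.sum_product]
      refine Finset.sum_congr rfl (fun w _ => ?_)
      rw [Set.ncard_eq_toFinset_card', ← Finset.card_filter]
      congr 1
      ext; simp
    rw [this]; push_cast; rfl
  have hcW : (0:ℝ) < Fintype.card W := by
    have := Fintype.card_pos (α := W); exact_mod_cast this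
  have hu := hmax Finset.univ Finset.univ_nonempty
  have hfu : avgDeg H ≤ 2 * f Finset.univ := by
    have h1 := hd Finset.univ Finset.univ_nonempty
    have h2 := phiPot_le (Fintype.card W)
    have h3 : f Finset.univ * ((Fintype.card W : ℝ) * phiPot (Fintype.card W)) = avgDeg H * Fintype.card W := by
      simp only [f]
      rw [← heu, ← Finset.card_univ, div_mul_cancel₀ _ h1.ne']
    have h4 : 0 ≤ f Finset.univ := div_nonneg (by positivity) h1.le
    have h5 : avgDeg H * Fintype.card W ≤ (2 * f Finset.univ) * Fintype.card W := by
      rw [← h3]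
      have : 0 ≤ f Finset.univ * Fintype.card W := by positivity
      nlinarith
    exact le_of_mul_le_mul_right h5 hcW
  have hXeq : (eCount H X : ℝ) = f X * X.card * phiPot X.card := by
    have := (hd X hX).ne'
    simp only [f]
    rw [mul_assoc, div_mul_cancel₀ _ this]
  refine ⟨X, f X, by linarith, hX, hXeq, ?_, ?_⟩
  · intro Y
    rcases Y.eq_empty_or_nonempty with rfl | hY
    · simp [eCount]
    · have h1 := hmax Y hY
      have h2 := hd Y hY
      simp only [f] at h1
      rw [div_le_iff₀ h2] at h1
      rw [mul_assoc]; exact h1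
  · have hXc : (0:ℝ) < X.card := by exact_mod_cast hX.card_pos
    have h1 : (eCount H X : ℝ) ≤ X.card * X.card := by
      have : eCount H X ≤ X.card * X.card := by
        unfold eCount
        refine (Finset.card_filter_le _ _).trans ?_
        rw [Finset.card_product]
      exact_mod_cast this
    have h2 : f X ≤ X.card := by
      simp only [f]
      rw [div_le_iff₀ (hd X hX)]
      have := phiPot_ge X.card
      have h3 : (0:ℝ) ≤ (X.card : ℝ) * X.card := mul_nonneg hXc.le hXc.le
      nlinarith
    linarith

theorem cast_log_lt (k : ℕ) : k ≤ 2 ^ (Nat.log 2 k + 1) :=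
  (Nat.lt_pow_succ_log_self (by norm_num) k).le

open Classical in
/-- Edges of `H` not covered by the family `Q`: lower bound. -/
theorem uncovered_lower {W : Type} [Fintype W] (H : SimpleGraph W) (lam : ℝ) (hlam : 0 < lam)
    (k : ℕ) (hkW : Fintype.card W = k) (hk : 2 ≤ k) (l : ℝ) (hl : l = (Nat.log 2 k : ℝ) + 1)
    (heq : (eCount H Finset.univ : ℝ) = lam * k * phiPot k)
    (hle : ∀ Y : Finset W, (eCount H Y : ℝ) ≤ lam * Y.card * phiPot Y.card)
    {ι : Type} [Fintype ι] (Q : ι → Finset W) (hQ : ∀ i, 2 * (Q i).card ≤ k)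
    (hsum : (∑ i, ((Q i).card : ℝ)) ≤ k * (1 + 1 / (4 * l ^ 2))) :
    (1 / (4 * l ^ 2)) * (eCount H Finset.univ : ℝ) ≤
      ((((Finset.univ : Finset W) ×ˢ (Finset.univ : Finset W)).filter (fun p => H.Adj p.1 p.2)).filter
        (fun p => ∀ i, ¬ (p.1 ∈ Q i ∧ p.2 ∈ Q i))).card := by
  set E := ((Finset.univ : Finset W) ×ˢ (Finset.univ : Finset W)).filter (fun p => H.Adj p.1 p.2) with hE
  have hEc : eCount H Finset.univ = E.card := by
    unfold eCount; rw [hE]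
  have hsplit := Finset.card_filter_add_card_filter_not (s := E) (fun p => ∀ i, ¬ (p.1 ∈ Q i ∧ p.2 ∈ Q i))
  have hcov : (E.filter (fun p => ¬ ∀ i, ¬ (p.1 ∈ Q i ∧ p.2 ∈ Q i))).card ≤ ∑ i, eCount H (Q i) := by
    have hsub : E.filter (fun p => ¬ ∀ i, ¬ (p.1 ∈ Q i ∧ p.2 ∈ Q i)) ⊆
        Finset.univ.biUnion (fun i => ((Q i) ×ˢ (Q i)).filter (fun p => H.Adj p.1 p.2)) := by
      intro p hp
      simp only [hE, Finset.mem_filter, Finset.mem_biUnion, Finset.mem_product, Finset.mem_univ,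
        true_and, not_forall, not_not] at hp ⊢
      obtain ⟨h1, i, h2⟩ := hp
      exact ⟨i, h2, h1⟩
    refine (Finset.card_le_card hsub).trans (Finset.card_biUnion_le.trans ?_)
    apply le_of_eq
    refine Finset.sum_congr rfl (fun i _ => ?_)
    unfold eCount
    congr
  have hl1 : 1 ≤ l := by rw [hl]; have : (0:ℝ) ≤ Nat.log 2 k := by positivity
                         linarith
  have hk0 : (0:ℝ) < k := by exact_mod_cast (by omega : 0 < k)
  have hp1 := phiPot_ge k
  have hp2 := phiPot_le k
  set ε : ℝ := 1 / (4 * l ^ 2) with hε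
  have hε0 : 0 < ε := by positivity
  have hε4 : 1 / l ^ 2 = 4 * ε := by rw [hε]; field_simp
  have hε1 : 4 * ε ≤ 1 := by
    rw [← hε4, div_le_one (by positivity)]; nlinarith
  have hcovR : (∑ i, (eCount H (Q i) : ℝ)) ≤ lam * (phiPot k - 4 * ε) * (k * (1 + ε)) := by
    calc (∑ i, (eCount H (Q i) : ℝ)) ≤ ∑ i, lam * (phiPot k - 4 * ε) * ((Q i).card : ℝ) := by
          refine Finset.sum_le_sum (fun i _ => (hle (Q i)).trans ?_)
          have := phiPot_gap (Q i).card k hk (hQ i)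
          rw [← hl, hε4] at this
          have h3 : (0:ℝ) ≤ lam * (Q i).card := by positivity
          nlinarith
      _ = lam * (phiPot k - 4 * ε) * ∑ i, ((Q i).card : ℝ) := by rw [Finset.mul_sum]
      _ ≤ _ := by
          apply mul_le_mul_of_nonneg_left hsum
          apply mul_nonneg hlam.le; linarith
  have hsplit' : ((E.filter (fun p => ∀ i, ¬ (p.1 ∈ Q i ∧ p.2 ∈ Q i))).card : ℝ) +
      (E.filter (fun p => ¬ ∀ i, ¬ (p.1 ∈ Q i ∧ p.2 ∈ Q i))).card = E.card := by exact_mod_cast hsplit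
  have hcov' : ((E.filter (fun p => ¬ ∀ i, ¬ (p.1 ∈ Q i ∧ p.2 ∈ Q i))).card : ℝ) ≤
      ∑ i, (eCount H (Q i) : ℝ) := by exact_mod_cast hcov
  have hEc' : (E.card : ℝ) = lam * k * phiPot k := by rw [← hEc, heq]
  rw [heq]
  have hlk : 0 < lam * k := by positivity
  have hfin : (phiPot k - 4 * ε) * (1 + ε) + ε * phiPot k ≤ phiPot k := by nlinarith
  have hfin2 := mul_le_mul_of_nonneg_left hfin hlk.le
  have : lam * (phiPot k - 4 * ε) * (k * (1 + ε)) + ε * (lam * k * phiPot k) =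
    lam * k * ((phiPot k - 4 * ε) * (1 + ε) + ε * phiPot k) := by ring
  linarith

open Classical in
/-- Encoding a cover by a function on `Fin M`. -/
theorem encode_cover {W ι : Type} [Fintype W] [Nonempty W] [Fintype ι] (Q : ι → Finset W) (M : ℕ)
    (hcov : ∀ w, ∃ i, w ∈ Q i) (hsum : ∑ i, (Q i).card ≤ M) :
    ∃ g : Fin M → W × Fin M, ∀ u v : W,
      (∃ i, u ∈ Q i ∧ v ∈ Q i) ↔ ∃ j : Fin M, (∃ a, g a = (u, j)) ∧ (∃ b, g b = (v, j)) := by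
  let I := Σ i, {w // w ∈ Q i}
  have hI : Fintype.card I ≤ M := by
    simp only [I, Fintype.card_sigma, Fintype.card_coe]
    exact hsum
  let ι' := {i // (Q i).Nonempty}
  have hι' : Fintype.card ι' ≤ M := by
    refine le_trans ?_ hI
    exact Fintype.card_le_of_injective (fun i : ι' => (⟨i.1, ⟨i.2.choose, i.2.choose_spec⟩⟩ : I))
      (fun a b h => Subtype.ext (congrArg Sigma.fst h))
  obtain ⟨e⟩ : Nonempty (ι' ↪ Fin M) := Function.Embedding.nonempty_of_card_le (by simpa using hι')
  obtain ⟨f⟩ : Nonempty (I ↪ Fin M) := Function.Embedding.nonempty_of_card_le (by simpa using hI)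
  have : Nonempty I := by
    obtain ⟨i, hi⟩ := hcov (Classical.arbitrary W)
    exact ⟨⟨i, ⟨_, hi⟩⟩⟩
  let h : I → W × Fin M := fun x => (x.2.1, e ⟨x.1, ⟨x.2.1, x.2.2⟩⟩)
  refine ⟨fun a => h (Function.invFun f a), fun u v => ⟨?_, ?_⟩⟩
  · rintro ⟨i, hu, hv⟩
    refine ⟨e ⟨i, ⟨u, hu⟩⟩, ⟨f ⟨i, ⟨u, hu⟩⟩, ?_⟩, ⟨f ⟨i, ⟨v, hv⟩⟩, ?_⟩⟩
    · simp only [Function.leftInverse_invFun f.injective _, h]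
    · simp only [Function.leftInverse_invFun f.injective _, h]
  · rintro ⟨j, ⟨a, ha⟩, ⟨b, hb⟩⟩
    simp only [h, Prod.mk.injEq] at ha hb
    obtain ⟨ha1, ha2⟩ := ha
    obtain ⟨hb1, hb2⟩ := hb
    have := congrArg Subtype.val (e.injective (ha2.trans hb2.symm))
    change (Function.invFun f a).1 = (Function.invFun f b).1 at this
    refine ⟨(Function.invFun f a).1, ?_, ?_⟩
    · rw [← ha1]; exact (Function.invFun f a).2.2
    · rw [← hb1, this]; exact (Function.invFun f b).2.2

theorem final_count (k L : ℕ) (hk : k ≤ 2 ^ L) (hk0 : 1 ≤ k) (hL : 1 ≤ L) (l : ℝ) (hl : l = L) :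
    (1 - 1 / (4 * l ^ 2)) ^ (24 * L ^ 3 * k) * (((k * (2 * k)) ^ (2 * k) : ℕ) : ℝ) < 1 := by
  have hl1 : (1:ℝ) ≤ l := by rw [hl]; exact_mod_cast hL
  have h1 : (1 - 1 / (4 * l ^ 2)) ^ (24 * L ^ 3 * k) ≤ Real.exp (-(6 * L * k)) := by
    have h2 : 1 - 1 / (4 * l ^ 2) ≤ Real.exp (-(1 / (4 * l ^ 2))) := Real.one_sub_le_exp_neg _
    have h3 : 0 ≤ 1 - 1 / (4 * l ^ 2) := by
      have : 1 / (4 * l ^ 2) ≤ 1 := by rw [div_le_one (by positivity)]; nlinarith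
      linarith
    refine (pow_le_pow_left₀ h3 h2 _).trans (le_of_eq ?_)
    rw [← Real.exp_nat_mul]
    congr 1
    push_cast
    rw [← hl]
    field_simp
    ring
  have h4 : (k * (2 * k)) ^ (2 * k) ≤ 2 ^ (6 * L * k) := by
    have h5 : k * (2 * k) ≤ 2 ^ (3 * L) := by
      calc k * (2 * k) ≤ 2 ^ L * (2 * 2 ^ L) := by gcongr
        _ = 2 ^ (2 * L + 1) := by ring
        _ ≤ 2 ^ (3 * L) := Nat.pow_le_pow_right (by norm_num) (by omega)
    calc (k * (2 * k)) ^ (2 * k) ≤ (2 ^ (3 * L)) ^ (2 * k) := Nat.pow_le_pow_left h5 _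
      _ = 2 ^ (6 * L * k) := by rw [← pow_mul]; congr 1; ring
  have h6 : (((k * (2 * k)) ^ (2 * k) : ℕ) : ℝ) ≤ 2 ^ (6 * L * k) := by exact_mod_cast h4
  have h7 : (2:ℝ) ^ (6 * L * k) < Real.exp (6 * L * k) := by
    have : Real.exp (6 * L * k) = Real.exp 1 ^ (6 * L * k) := by
      rw [← Real.exp_nat_mul]; push_cast; ring_nf
    rw [this]
    apply pow_lt_pow_left₀ _ (by norm_num)
    · have : 0 < 6 * L * k := by positivity
      omega
    · have := Real.exp_one_gt_d9; linarith
  calc _ ≤ Real.exp (-(6 * L * k)) * 2 ^ (6 * L * k) := by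
        apply mul_le_mul h1 h6 (by positivity) (Real.exp_pos _).le
    _ < Real.exp (-(6 * L * k)) * Real.exp (6 * L * k) := by
        apply mul_lt_mul_of_pos_left h7 (Real.exp_pos _)
    _ = 1 := by rw [← Real.exp_add]; simp

open Classical in
theorem sparsify {W : Type} [Fintype W] (H : SimpleGraph W) (lam : ℝ) (hlam : 0 < lam)
    (k : ℕ) (hkW : Fintype.card W = k) (hk : 2 ≤ k) (L : ℕ) (hL : L = Nat.log 2 k + 1)
    (heq : (eCount H Finset.univ : ℝ) = lam * k * phiPot k)
    (hle : ∀ Y : Finset W, (eCount H Y : ℝ) ≤ lam * Y.card * phiPot Y.card) :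
    ∃ F : Finset (W × W), F.card ≤ 24 * L ^ 3 * k ∧ (∀ p ∈ F, H.Adj p.1 p.2) ∧
      ∀ (ι : Type) [Fintype ι] (Q : ι → Finset W), (∀ i, 2 * (Q i).card ≤ k) →
        (∑ i, ((Q i).card : ℝ)) ≤ k * (1 + 1 / (4 * (L : ℝ) ^ 2)) →
        (∀ w, ∃ i, w ∈ Q i) → ∃ p ∈ F, ∀ i, ¬ (p.1 ∈ Q i ∧ p.2 ∈ Q i) := by
  have hLl : (L : ℝ) = (Nat.log 2 k : ℝ) + 1 := by rw [hL]; push_cast; rfl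
  have : Nonempty W := by
    rw [← Fintype.card_pos_iff]; omega
  set E := ((Finset.univ : Finset W) ×ˢ (Finset.univ : Finset W)).filter (fun p => H.Adj p.1 p.2) with hE
  have hEc : eCount H Finset.univ = E.card := by
    unfold eCount; rw [hE]
  have hEpos : E.Nonempty := by
    rw [← Finset.card_pos, ← hEc]
    have : (0:ℝ) < eCount H Finset.univ := by
      rw [heq]
      have := phiPot_ge k
      have hk0 : (0:ℝ) < k := by exact_mod_cast (by omega : 0 < k)
      positivity
    exact_mod_cast this
  have hL1 : (1:ℝ) ≤ L := by rw [hL]; push_cast; have : (0:ℝ) ≤ Nat.log 2 k := by positivity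
                             linarith
  set γ : ℝ := 1 / (4 * (L:ℝ) ^ 2) with hγ
  have hγ0 : 0 < γ := by positivity
  have hγ1 : γ ≤ 1 := by rw [hγ, div_le_one (by positivity)]; nlinarith
  obtain ⟨U, hUdef⟩ : ∃ U : (Fin (2 * k) → W × Fin (2 * k)) → (W × W) → Prop, U = fun g p =>
    ¬ ∃ j, (∃ a, g a = (p.1, j)) ∧ (∃ b, g b = (p.2, j)) := ⟨_, rfl⟩
  let R : Finset (Fin (2 * k) → W × Fin (2 * k)) :=
    Finset.univ.filter (fun g => γ * E.card ≤ ((E.filter (fun e => U g e)).card : ℝ))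
  obtain ⟨F, hFE, hFc, hF⟩ := hitting_aux R E hEpos U γ hγ1
    (fun g hg => (Finset.mem_filter.mp hg).2) (24 * L ^ 3 * k)
  have hRc : (R.card : ℝ) ≤ (((k * (2 * k)) ^ (2 * k) : ℕ) : ℝ) := by
    have : R.card ≤ (k * (2 * k)) ^ (2 * k) := by
      refine (Finset.card_filter_le _ _).trans (le_of_eq ?_)
      rw [Finset.card_univ, Fintype.card_fun, Fintype.card_prod, Fintype.card_fin, hkW]
    exact_mod_cast this
  have hzero : R.filter (fun g => ∀ e ∈ F, ¬ U g e) = ∅ := by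
    rw [← Finset.card_eq_zero]
    have h1 := final_count k L (by rw [hL]; exact cast_log_lt k) (by omega) (by omega) L rfl
    have h2 : ((R.filter (fun g => ∀ e ∈ F, ¬ U g e)).card : ℝ) < 1 := by
      have hF' : ((R.filter (fun g => ∀ e ∈ F, ¬ U g e)).card : ℝ) ≤
          (1 - γ) ^ (24 * L ^ 3 * k) * R.card := by
        convert hF
      refine lt_of_le_of_lt (hF'.trans ?_) h1
      apply mul_le_mul_of_nonneg_left hRc
      apply pow_nonneg; linarith
    have h3 : (R.filter (fun g => ∀ e ∈ F, ¬ U g e)).card < 1 := by exact_mod_cast h2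
    omega
  refine ⟨F, hFc, fun p hp => (Finset.mem_filter.mp (hFE hp)).2, ?_⟩
  intro ι _ Q hQ hsum hcov
  have hsum2 : ∑ i, (Q i).card ≤ 2 * k := by
    have : (∑ i, ((Q i).card : ℝ)) ≤ 2 * k := by
      refine hsum.trans ?_
      have hk0 : (0:ℝ) ≤ k := by positivity
      nlinarith
    exact_mod_cast this
  obtain ⟨g, hg⟩ := encode_cover Q (2 * k) hcov hsum2
  have hlow := uncovered_lower H lam hlam k hkW hk L hLl heq hle Q hQ hsum
  have hUg : ∀ p : W × W, U g p ↔ ∀ i, ¬ (p.1 ∈ Q i ∧ p.2 ∈ Q i) := by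
    intro p
    simp only [hUdef]
    rw [← hg p.1 p.2, not_exists]
  have hgR : g ∈ R := by
    simp only [R, Finset.mem_filter, Finset.mem_univ, true_and]
    rw [hEc] at hlow
    simp only [hUg]
    exact hlow
  by_contra hcon
  push Not at hcon
  have : g ∈ R.filter (fun g => ∀ e ∈ F, ¬ U g e) := by
    rw [Finset.mem_filter]
    refine ⟨hgR, fun e he => ?_⟩
    rw [hUg]
    push Not
    exact hcon e he
  rw [hzero] at this
  simp at this

open Classical in
/-- Bounded-size connected models inside the branch sets realizing the edges of `F`. -/
theorem small_model {V W : Type} [Fintype W] (G : SimpleGraph V) (H : SimpleGraph W) (r : ℕ)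
    (D : DepthMinorRealization r G H) (F : Finset (W × W)) (hF : ∀ p ∈ F, H.Adj p.1 p.2) :
    ∃ T : W → Finset V, (∀ w w', w ≠ w' → Disjoint (T w) (T w')) ∧
      (∀ w, D.center w ∈ T w) ∧
      (∀ w, ∀ v ∈ T w, ∃ p : G.Walk (D.center w) v, ∀ x ∈ p.support, x ∈ T w) ∧
      (∀ p ∈ F, ∃ a ∈ T p.1, ∃ b ∈ T p.2, G.Adj a b) ∧
      (Finset.univ.biUnion T).card ≤ Fintype.card W + 2 * (r + 1) * F.card := by
  choose a ha b hb hab using fun p : F => D.adj p.1.1 p.1.2 (hF p.1 p.2)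
  choose pa la sa using fun p : F => D.radius p.1.1 (a p) (ha p)
  choose pb lb sb using fun p : F => D.radius p.1.2 (b p) (hb p)
  let T : W → Finset V := fun w => {D.center w} ∪
    ((Finset.univ.filter (fun p : F => p.1.1 = w)).biUnion (fun p => (pa p).support.toFinset) ∪
     (Finset.univ.filter (fun p : F => p.1.2 = w)).biUnion (fun p => (pb p).support.toFinset))
  have memT : ∀ w v, v ∈ T w ↔ v = D.center w ∨ (∃ p : F, p.1.1 = w ∧ v ∈ (pa p).support) ∨
      (∃ p : F, p.1.2 = w ∧ v ∈ (pb p).support) := by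
    intro w v
    simp only [T, Finset.mem_union, Finset.mem_singleton, Finset.mem_biUnion, Finset.mem_filter,
      Finset.mem_univ, true_and, List.mem_toFinset]
  have TS : ∀ w v, v ∈ T w → v ∈ D.S w := by
    intro w v hv
    rw [memT] at hv
    rcases hv with rfl | ⟨p, rfl, hp⟩ | ⟨p, rfl, hp⟩
    · exact D.center_mem w
    · exact sa p v hp
    · exact sb p v hp
  refine ⟨T, ?_, ?_, ?_, ?_, ?_⟩
  · intro w w' hne
    rw [Finset.disjoint_left]
    intro v hv hv'
    exact Set.disjoint_left.mp (D.disj w w' hne) (TS w v hv) (TS w' v hv')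
  · intro w; rw [memT]; exact Or.inl rfl
  · intro w v hv
    have hv' := (memT w v).mp hv
    rcases hv' with rfl | ⟨p, rfl, hp⟩ | ⟨p, rfl, hp⟩
    · refine ⟨SimpleGraph.Walk.nil, fun x hx => ?_⟩
      simp only [SimpleGraph.Walk.support_nil, List.mem_singleton] at hx
      rw [hx]; exact hv
    · refine ⟨(pa p).takeUntil v hp, fun x hx => ?_⟩
      rw [memT]
      exact Or.inr (Or.inl ⟨p, rfl, (pa p).support_takeUntil_subset_support hp hx⟩)
    · refine ⟨(pb p).takeUntil v hp, fun x hx => ?_⟩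
      rw [memT]
      exact Or.inr (Or.inr ⟨p, rfl, (pb p).support_takeUntil_subset_support hp hx⟩)
  · intro p hp
    refine ⟨a ⟨p, hp⟩, ?_, b ⟨p, hp⟩, ?_, hab ⟨p, hp⟩⟩
    · rw [memT]; exact Or.inr (Or.inl ⟨⟨p, hp⟩, rfl, SimpleGraph.Walk.end_mem_support _⟩)
    · rw [memT]; exact Or.inr (Or.inr ⟨⟨p, hp⟩, rfl, SimpleGraph.Walk.end_mem_support _⟩)
  · have hsub : Finset.univ.biUnion T ⊆ Finset.univ.image D.center ∪
        ((Finset.univ : Finset F).biUnion (fun p => (pa p).support.toFinset) ∪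
         (Finset.univ : Finset F).biUnion (fun p => (pb p).support.toFinset)) := by
      intro v hv
      simp only [Finset.mem_biUnion, Finset.mem_univ, true_and] at hv
      obtain ⟨w, hw⟩ := hv
      rw [memT] at hw
      simp only [Finset.mem_union, Finset.mem_image, Finset.mem_biUnion, Finset.mem_univ, true_and,
        List.mem_toFinset]
      rcases hw with rfl | ⟨p, _, hp⟩ | ⟨p, _, hp⟩
      · exact Or.inl ⟨w, rfl⟩
      · exact Or.inr (Or.inl ⟨p, hp⟩)
      · exact Or.inr (Or.inr ⟨p, hp⟩)
    have h1 : (Finset.univ.image D.center).card ≤ Fintype.card W := Finset.card_image_le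
    have h2 : ((Finset.univ : Finset F).biUnion (fun p => (pa p).support.toFinset)).card ≤
        F.card * (r + 1) := by
      refine (Finset.card_biUnion_le_card_mul _ _ (r + 1) (fun p _ => ?_)).trans (by simp)
      refine (List.toFinset_card_le _).trans ?_
      rw [SimpleGraph.Walk.length_support]
      have := la p; omega
    have h3 : ((Finset.univ : Finset F).biUnion (fun p => (pb p).support.toFinset)).card ≤
        F.card * (r + 1) := by
      refine (Finset.card_biUnion_le_card_mul _ _ (r + 1) (fun p _ => ?_)).trans (by simp)
      refine (List.toFinset_card_le _).trans ?_
      rw [SimpleGraph.Walk.length_support]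
      have := lb p; omega
    have h4 := Finset.card_le_card hsub
    have h5 := Finset.card_union_le (Finset.univ.image D.center)
        ((Finset.univ : Finset F).biUnion (fun p => (pa p).support.toFinset) ∪
         (Finset.univ : Finset F).biUnion (fun p => (pb p).support.toFinset))
    have h6 := Finset.card_union_le
        ((Finset.univ : Finset F).biUnion (fun p => (pa p).support.toFinset))
         ((Finset.univ : Finset F).biUnion (fun p => (pb p).support.toFinset))
    have h7 : 2 * (r + 1) * F.card = F.card * (r + 1) + F.card * (r + 1) := by ring
    omega

open Classical in
/-- Transfer of a division of `G` to a cover of `H`. -/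
theorem transfer_cover {V W ι : Type} [Fintype W] [Fintype ι] (G : SimpleGraph V)
    (T : W → Finset V) (c : W → V) (P : ι → Finset V)
    (hdisj : ∀ w w', w ≠ w' → Disjoint (T w) (T w'))
    (hc : ∀ w, c w ∈ T w)
    (hconn : ∀ w, ∀ v ∈ T w, ∃ p : G.Walk (c w) v, ∀ x ∈ p.support, x ∈ T w)
    (hsub : ∀ i, P i ⊆ Finset.univ.biUnion T)
    (hedge : ∀ u ∈ Finset.univ.biUnion T, ∀ v ∈ Finset.univ.biUnion T, G.Adj u v →
      ∃ i, u ∈ P i ∧ v ∈ P i) :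
    (∀ i, (Finset.univ.filter (fun w => ∃ v ∈ T w, v ∈ P i)).card ≤ (P i).card) ∧
    (∑ i, (Finset.univ.filter (fun w => ∃ v ∈ T w, v ∈ P i)).card) +
      (Finset.univ.biUnion T).card ≤ Fintype.card W + ∑ i, (P i).card := by
  constructor
  · intro i
    have hex : ∀ w, ∃ v, (∃ v ∈ T w, v ∈ P i) → v ∈ T w ∧ v ∈ P i := by
      intro w
      by_cases h : ∃ v ∈ T w, v ∈ P i
      · obtain ⟨v, hv⟩ := h
        exact ⟨v, fun _ => hv⟩
      · exact ⟨c w, fun h' => absurd h' h⟩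
    choose f hf using hex
    apply Finset.card_le_card_of_injOn f
    · intro w hw
      have hw' := (Finset.mem_filter.mp hw).2
      exact (hf w hw').2
    · intro w hw w' hw' heq
      have h1 := (hf w (Finset.mem_filter.mp hw).2).1
      have h2 := (hf w' (Finset.mem_filter.mp hw').2).1
      by_contra hne
      rw [heq] at h1
      exact Finset.disjoint_left.mp (hdisj w w' hne) h1 h2
  · have hT : ∀ w, T w ⊆ Finset.univ.biUnion T := fun w =>
      Finset.subset_biUnion_of_mem T (Finset.mem_univ w)
    have h1 : ∀ w : W, (Finset.univ.filter (fun i => ∃ v ∈ T w, v ∈ P i)).card + (T w).card ≤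
        1 + ∑ v ∈ T w, (Finset.univ.filter (fun i => v ∈ P i)).card := fun w =>
      touch_count G P (T w) (c w) (hc w) (hconn w)
        (fun u hu v hv => hedge u (hT w hu) v (hT w hv))
    have h2 := Finset.sum_le_sum (fun w (_ : w ∈ (Finset.univ : Finset W)) => h1 w)
    rw [Finset.sum_add_distrib, Finset.sum_add_distrib] at h2
    have hpd : ((Finset.univ : Finset W) : Set W).PairwiseDisjoint T := by
      intro w _ w' _ hne
      exact hdisj w w' hne
    rw [← Finset.sum_biUnion hpd, ← Finset.card_biUnion (fun w _ w' _ hne => hdisj w w' hne)] at h2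
    have h3 : ∑ v ∈ Finset.univ.biUnion T, (Finset.univ.filter (fun i => v ∈ P i)).card =
        ∑ i, (P i).card := by
      have := Finset.sum_card_bipartiteAbove_eq_sum_card_bipartiteBelow
        (s := Finset.univ.biUnion T) (t := (Finset.univ : Finset ι)) (r := fun v i => v ∈ P i)
      simp only [Finset.bipartiteAbove, Finset.bipartiteBelow] at this
      rw [this]
      refine Finset.sum_congr rfl (fun i _ => ?_)
      congr 1
      ext v
      rw [Finset.mem_filter]
      exact ⟨fun h => h.2, fun h => ⟨hsub i h, h⟩⟩
    have h4 : ∑ w, (Finset.univ.filter (fun i => ∃ v ∈ T w, v ∈ P i)).card =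
        ∑ i, (Finset.univ.filter (fun w => ∃ v ∈ T w, v ∈ P i)).card := by
      have := Finset.sum_card_bipartiteAbove_eq_sum_card_bipartiteBelow
        (s := (Finset.univ : Finset W)) (t := (Finset.univ : Finset ι))
        (r := fun w i => ∃ v ∈ T w, v ∈ P i)
      simp only [Finset.bipartiteAbove, Finset.bipartiteBelow] at this
      exact this
    rw [h3, h4] at h2
    simp only [Finset.sum_const, Finset.card_univ, smul_eq_mul, mul_one] at h2
    exact h2

open Classical in
theorem core_contra {V W : Type} [Fintype W] (G : SimpleGraph V) (H : SimpleGraph W) (r : ℕ)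
    (D : DepthMinorRealization r G H) (C₀ δ s M : ℝ)
    (hC₀ : 0 < C₀) (hδ0 : 0 < δ) (hδ1 : δ ≤ 1) (hM : 0 < M)
    (hsM : 3 * M ≤ s ^ δ) (hsC : 12 * C₀ ≤ s ^ δ)
    (hMC : 2 * C₀ ≤ M * ((4/3 : ℝ) ^ δ - 1))
    (sep : ∀ X : Finset V, ∃ A B : Finset V, A ∪ B = X ∧
      (∀ a ∈ A \ B, ∀ b ∈ B \ A, ¬ G.Adj a b) ∧ 3 * (A \ B).card ≤ 2 * X.card ∧
      3 * (B \ A).card ≤ 2 * X.card ∧ ((A ∩ B).card : ℝ) ≤ C₀ * (X.card : ℝ) ^ (1 - δ))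
    (lam : ℝ) (hlam : 0 < lam)
    (k : ℕ) (hkW : Fintype.card W = k) (hk : 2 ≤ k) (L : ℕ) (hL : L = Nat.log 2 k + 1)
    (hs : s = (k : ℝ) / 2)
    (heq : (eCount H Finset.univ : ℝ) = lam * k * phiPot k)
    (hle : ∀ Y : Finset W, (eCount H Y : ℝ) ≤ lam * Y.card * phiPot Y.card)
    (hbig : 588 * M * (L : ℝ) ^ 5 * (r + 1) ≤ s ^ δ) : False := by
  obtain ⟨F, hFc, hFa, hF⟩ := sparsify H lam hlam k hkW hk L hL heq hle
  obtain ⟨T, hdisj, hc, hconn, hFe, hN⟩ := small_model G H r D F hFa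
  set X := Finset.univ.biUnion T with hX
  have hk0 : (0:ℝ) < k := by exact_mod_cast (by omega : 0 < k)
  have hs0 : 0 < s := by rw [hs]; positivity
  have hT : ∀ w, T w ⊆ X := fun w => Finset.subset_biUnion_of_mem T (Finset.mem_univ w)
  have hkN : k ≤ X.card := by
    rw [← hkW, ← Finset.card_univ]
    apply Finset.card_le_card_of_injOn D.center
    · intro w _; exact hT w (hc w)
    · intro w _ w' _ heq'
      by_contra hne
      have h1 := hc w
      rw [heq'] at h1
      exact Finset.disjoint_left.mp (hdisj w w' hne) h1 (hc w')
  have hkN' : (k : ℝ) ≤ X.card := by exact_mod_cast hkN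
  obtain ⟨ι, _, P, p1, p2, p3, p4, p5⟩ := division_aux G C₀ δ s M hC₀ hδ0 hδ1 hs0 hM hsM hsC hMC sep
    X.card X rfl (by rw [hs]; linarith)
  obtain ⟨t1, t2⟩ := transfer_cover G T D.center P hdisj hc hconn p3 p4
  have hL1 : (1:ℝ) ≤ L := by exact_mod_cast (by omega : 1 ≤ L)
  have hN' : (X.card : ℝ) ≤ 49 * k * (L:ℝ) ^ 3 * (r + 1) := by
    have h1 : X.card ≤ k + 2 * (r + 1) * (24 * L ^ 3 * k) := by
      refine hN.trans ?_
      rw [hkW]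
      gcongr
    have h2 : (X.card : ℝ) ≤ k + 2 * (r + 1) * (24 * (L:ℝ) ^ 3 * k) := by exact_mod_cast h1
    have h3 : (1:ℝ) ≤ (L:ℝ) ^ 3 := one_le_pow₀ hL1
    have h4 : (1:ℝ) ≤ (L:ℝ) ^ 3 * (r + 1) := by
      have : (0:ℝ) ≤ r := by positivity
      nlinarith
    nlinarith
  have hsneg : 0 < s ^ (-δ) := Real.rpow_pos_of_pos hs0 _
  have hprod : s ^ δ * s ^ (-δ) = 1 := by
    rw [← Real.rpow_add hs0]; simp
  have hexc : 3 * M * X.card * s ^ (-δ) ≤ k * (1 / (4 * (L:ℝ) ^ 2)) := by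
    calc 3 * M * X.card * s ^ (-δ) ≤ 3 * M * (49 * k * (L:ℝ) ^ 3 * (r + 1)) * s ^ (-δ) := by gcongr
      _ = (588 * M * (L : ℝ) ^ 5 * (r + 1)) * s ^ (-δ) * (k * (1 / (4 * (L:ℝ) ^ 2))) := by
          field_simp; ring
      _ ≤ s ^ δ * s ^ (-δ) * (k * (1 / (4 * (L:ℝ) ^ 2))) := by gcongr
      _ = _ := by rw [hprod, one_mul]
  obtain ⟨p, hpF, hp⟩ := hF ι (fun i => Finset.univ.filter (fun w => ∃ v ∈ T w, v ∈ P i)) (by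
      intro i
      have h1 : (((Finset.univ.filter (fun w => ∃ v ∈ T w, v ∈ P i)).card : ℕ) : ℝ) ≤ s :=
        le_trans (by exact_mod_cast t1 i) (p1 i)
      rw [hs, le_div_iff₀ (by norm_num)] at h1
      have h2 : (Finset.univ.filter (fun w => ∃ v ∈ T w, v ∈ P i)).card * 2 ≤ k := by
        exact_mod_cast h1
      linarith) (by
      have t2' : (∑ i, ((Finset.univ.filter (fun w => ∃ v ∈ T w, v ∈ P i)).card : ℝ)) + X.card ≤
          k + ∑ i, ((P i).card : ℝ) := by
        rw [← hkW]; exact_mod_cast t2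
      have hnn : 0 ≤ M * (X.card : ℝ) ^ (1 - δ) := by positivity
      linarith) (by
      intro w
      obtain ⟨i, hi⟩ := p2 _ (hT w (hc w))
      exact ⟨i, by
        rw [Finset.mem_filter]
        exact ⟨Finset.mem_univ _, D.center w, hc w, hi⟩⟩)
  obtain ⟨a, ha, b, hb, hab⟩ := hFe p hpF
  obtain ⟨i, hi1, hi2⟩ := p4 a (hT _ ha) b (hT _ hb) hab
  apply hp i
  simp only [Finset.mem_filter, Finset.mem_univ, true_and]
  exact ⟨⟨a, ha, hi1⟩, ⟨b, hb, hi2⟩⟩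

theorem analysis_bound (B δ : ℝ) (hB : 1 ≤ B) (hδ0 : 0 < δ) (hδ1 : δ ≤ 1) :
    ∃ c : ℝ, 0 < c ∧ ∀ (k r : ℕ), 1 ≤ k →
      ((k : ℝ) / 2) ^ δ ≤ B * ((Nat.log 2 k + 1 : ℕ) : ℝ) ^ 5 * (r + 1) →
      2 * (k : ℝ) ≤ c * ((r : ℝ) + 1) ^ (1 / δ) *
        ((1 / δ) * Real.logb 2 ((r : ℝ) + 3)) ^ (5 / δ) := by
  have hl2 : 0 < Real.log 2 := Real.log_pos (by norm_num)
  set a : ℝ := 10 / (δ * Real.log 2) with ha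
  have ha0 : 0 < a := by positivity
  set K : ℝ := 2 * δ + Real.log B / Real.log 2 + 5 * |Real.log a| / Real.log 2 with hK
  have hK0 : 0 ≤ K := by
    have := Real.log_nonneg hB
    positivity
  set A : ℝ := 2 * (K + 1) / δ with hA
  have hA0 : 0 < A := by positivity
  refine ⟨4 * (B * A ^ 5) ^ (1 / δ), by positivity, ?_⟩
  intro k r hk hkr
  set L : ℝ := ((Nat.log 2 k + 1 : ℕ) : ℝ) with hL
  have hL1 : 1 ≤ L := by rw [hL]; exact_mod_cast (by omega)
  set ell : ℝ := Real.logb 2 ((r : ℝ) + 3) with hell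
  have hr0 : (0:ℝ) ≤ r := by positivity
  have hell1 : 1 ≤ ell := by
    rw [hell, Real.le_logb_iff_rpow_le (by norm_num) (by positivity)]
    rw [Real.rpow_one]; linarith
  have hlogr : Real.log ((r : ℝ) + 1) / Real.log 2 ≤ ell := by
    rw [hell, Real.logb]
    gcongr
    norm_num
  have hkpow : (2:ℝ) ^ (L - 2) ≤ (k : ℝ) / 2 := by
    have h1 : 2 ^ Nat.log 2 k ≤ k := Nat.pow_log_le_self 2 (by omega)
    have h2 : ((2:ℝ)) ^ (Nat.log 2 k) ≤ k := by exact_mod_cast h1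
    have h3 : L - 2 = (Nat.log 2 k : ℝ) - 1 := by rw [hL]; push_cast; ring
    rw [h3, Real.rpow_sub (by norm_num), Real.rpow_natCast, Real.rpow_one]
    gcongr
  have hlog : (L - 2) * δ * Real.log 2 ≤
      Real.log B + 5 * Real.log L + Real.log ((r : ℝ) + 1) := by
    have h1 : (2:ℝ) ^ ((L - 2) * δ) ≤ B * L ^ 5 * (r + 1) := by
      rw [Real.rpow_mul (by norm_num)]
      refine le_trans ?_ hkr
      exact Real.rpow_le_rpow (by positivity) hkpow hδ0.le
    have h2 := Real.log_le_log (by positivity) h1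
    rw [Real.log_rpow (by norm_num), Real.log_mul (by positivity) (by positivity),
      Real.log_mul (by positivity) (by positivity), Real.log_pow] at h2
    push_cast at h2
    exact h2
  have hlogL : Real.log L ≤ L / a + |Real.log a| := by
    have h1 : Real.log (L / a) ≤ L / a - 1 := Real.log_le_sub_one_of_pos (by positivity)
    rw [Real.log_div (by positivity) (by positivity)] at h1
    have := le_abs_self (Real.log a)
    linarith
  have hLa : L / a = L * δ * Real.log 2 / 10 := by
    rw [ha]; field_simp
  have hLA : L ≤ A * ell := by
    have h1 : L * δ / 2 ≤ K + ell := by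
      have e1 : Real.log B = (Real.log B / Real.log 2) * Real.log 2 := by field_simp
      have e2 : |Real.log a| = (|Real.log a| / Real.log 2) * Real.log 2 := by field_simp
      have e3 : Real.log ((r:ℝ) + 1) ≤ ell * Real.log 2 := by
        rwa [div_le_iff₀ hl2] at hlogr
      have e4 : (L * δ / 2) * Real.log 2 ≤ (K + ell) * Real.log 2 := by
        have : K * Real.log 2 = 2 * δ * Real.log 2 + Real.log B + 5 * |Real.log a| := by
          rw [hK]; field_simp
        rw [add_mul, this]
        rw [hLa] at hlogL
        linarith
      exact le_of_mul_le_mul_right e4 hl2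
    have h2 : K + ell ≤ (K + 1) * ell := by nlinarith
    rw [hA, div_mul_eq_mul_div, le_div_iff₀ hδ0]
    linarith
  have hfin : ((k : ℝ) / 2) ^ δ ≤ B * A ^ 5 * (ell ^ 5) * (r + 1) := by
    refine hkr.trans ?_
    have : L ^ 5 ≤ (A * ell) ^ 5 := pow_le_pow_left₀ (by linarith) hLA 5
    rw [mul_pow] at this
    calc B * L ^ 5 * (r + 1) ≤ B * (A ^ 5 * ell ^ 5) * (r + 1) := by gcongr
      _ = _ := by ring
  have hroot : (k : ℝ) / 2 ≤ (B * A ^ 5 * (ell ^ 5) * (r + 1)) ^ (1 / δ) := by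
    have h1 := Real.rpow_le_rpow (by positivity) hfin (by positivity : (0:ℝ) ≤ 1 / δ)
    rwa [← Real.rpow_mul (by positivity), mul_one_div_cancel hδ0.ne', Real.rpow_one] at h1
  rw [Real.mul_rpow (by positivity) (by positivity), Real.mul_rpow (by positivity) (by positivity)] at hroot
  have hell5 : (ell ^ 5) ^ (1 / δ) ≤ ((1 / δ) * ell) ^ (5 / δ) := by
    rw [← Real.rpow_natCast ell 5, ← Real.rpow_mul (by positivity)]
    have : ((5:ℕ) : ℝ) * (1 / δ) = 5 / δ := by push_cast; ring
    rw [this]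
    apply Real.rpow_le_rpow (by positivity) _ (by positivity)
    have : 1 ≤ 1 / δ := by rw [le_div_iff₀ hδ0]; linarith
    nlinarith
  calc 2 * (k:ℝ) = 4 * ((k:ℝ) / 2) := by ring
    _ ≤ 4 * ((B * A ^ 5) ^ (1 / δ) * (ell ^ 5) ^ (1 / δ) * ((r:ℝ) + 1) ^ (1 / δ)) := by gcongr
    _ ≤ 4 * ((B * A ^ 5) ^ (1 / δ) * ((1 / δ) * ell) ^ (5 / δ) * ((r:ℝ) + 1) ^ (1 / δ)) := by
        gcongr
    _ = _ := by ring

/-- Restriction of a realization to a vertex subset. -/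
def DepthMinorRealization.restrict {V W : Type} {r : ℕ} {G : SimpleGraph V} {H : SimpleGraph W}
    (D : DepthMinorRealization r G H) (X : Finset W) :
    DepthMinorRealization r G (H.comap (Subtype.val : X → W)) where
  S := fun w => D.S w.1
  disj := fun w w' h => D.disj w.1 w'.1 (fun h' => h (Subtype.ext h'))
  center := fun w => D.center w.1
  center_mem := fun w => D.center_mem w.1
  radius := fun w => D.radius w.1
  adj := fun w w' h => D.adj w.1 w'.1 h

theorem eCount_comap {W : Type} (H : SimpleGraph W) (X : Finset W) (Y : Finset X) :
    eCount (H.comap (Subtype.val : X → W)) Y = eCount H (Y.map (Function.Embedding.subtype _)) := by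
  classical
  unfold eCount
  rw [← Finset.card_map ((Function.Embedding.subtype (· ∈ X)).prodMap (Function.Embedding.subtype (· ∈ X)))]
  congr 1
  ext ⟨u, v⟩
  simp only [Finset.mem_map, Finset.mem_filter, Finset.mem_product, SimpleGraph.comap_adj]
  constructor
  · rintro ⟨⟨a, b⟩, ⟨⟨ha, hb⟩, hab⟩, he⟩
    simp only [Function.Embedding.prodMap, Function.Embedding.coeFn_mk, Prod.map_apply, Prod.mk.injEq] at he
    obtain ⟨rfl, rfl⟩ := he
    exact ⟨⟨⟨a, ha, rfl⟩, ⟨b, hb, rfl⟩⟩, hab⟩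
  · rintro ⟨⟨⟨a, ha, rfl⟩, ⟨b, hb, rfl⟩⟩, hab⟩
    exact ⟨(a, b), ⟨⟨ha, hb⟩, hab⟩, rfl⟩

open Classical in
theorem sep_of_class (C₀ δ : ℝ) (C : ∀ (V : Type) [Fintype V], SimpleGraph V → Prop)
    (hmono : ∀ (V W : Type) [Fintype V] [Fintype W] (G : SimpleGraph V)
          (H : SimpleGraph W), C V G → IsSubgraphOf H G → C W H)
    (hsep : ∀ (V : Type) [Fintype V] [DecidableEq V] (G : SimpleGraph V), C V G →
          ∃ A B : Finset V, IsBalancedSeparator G A B ∧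
            ((A ∩ B).card : ℝ) ≤ C₀ * (Fintype.card V : ℝ) ^ (1 - δ))
    (V : Type) [Fintype V] (G : SimpleGraph V) (hG : C V G) (X : Finset V) :
    ∃ A B : Finset V, A ∪ B = X ∧
      (∀ a ∈ A \ B, ∀ b ∈ B \ A, ¬ G.Adj a b) ∧ 3 * (A \ B).card ≤ 2 * X.card ∧
      3 * (B \ A).card ≤ 2 * X.card ∧ ((A ∩ B).card : ℝ) ≤ C₀ * (X.card : ℝ) ^ (1 - δ) := by
  have hC := hmono V X G (G.comap (Subtype.val : X → V)) hG
    ⟨Function.Embedding.subtype _, fun a b h => h⟩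
  obtain ⟨A, B, ⟨⟨hun, hno⟩, h1, h2⟩, h3⟩ := hsep X (G.comap (Subtype.val : X → V)) hC
  rw [Fintype.card_coe] at h1 h2 h3
  refine ⟨A.map (Function.Embedding.subtype _), B.map (Function.Embedding.subtype _), ?_, ?_, ?_, ?_, ?_⟩
  · rw [← Finset.map_union, hun]
    ext v; simp
  · rw [← Finset.map_sdiff, ← Finset.map_sdiff]
    intro a ha b hb
    rw [Finset.mem_map] at ha hb
    obtain ⟨a, ha, rfl⟩ := ha
    obtain ⟨b, hb, rfl⟩ := hb
    exact hno a ha b hb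
  · rw [← Finset.map_sdiff, Finset.card_map]; exact h1
  · rw [← Finset.map_sdiff, Finset.card_map]; exact h2
  · rw [← Finset.map_inter, Finset.card_map]; exact h3

/-- main theorem: if every `n`-vertex graph of a monotone class has a
balanced separator of order at most `C₀·n^(1-δ)`, then there are constants
`c₁, c₂` depending only on `C₀` and `δ` such that every depth-`r` minor of a graph
of the class has average degree at most
`c₁·(r+1)^(1/δ)·((1/δ)·log(r+3))^(c₂/δ)` (logs base 2). -/
theorem stmt_14 (C₀ δ : ℝ) (hC₀ : 0 < C₀) (hδ0 : 0 < δ) (hδ1 : δ ≤ 1) :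
    ∃ c₁ c₂ : ℝ, 0 < c₁ ∧ 0 < c₂ ∧
      ∀ (C : ∀ (V : Type) [Fintype V], SimpleGraph V → Prop),
        (∀ (V W : Type) [Fintype V] [Fintype W] (G : SimpleGraph V)
          (H : SimpleGraph W), C V G → IsSubgraphOf H G → C W H) →
        (∀ (V : Type) [Fintype V] [DecidableEq V] (G : SimpleGraph V), C V G →
          ∃ A B : Finset V, IsBalancedSeparator G A B ∧
            ((A ∩ B).card : ℝ) ≤ C₀ * (Fintype.card V : ℝ) ^ (1 - δ)) →
        ∀ (r : ℕ) (V W : Type) [Fintype V] [Fintype W] [Nonempty W]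
          (G : SimpleGraph V) (H : SimpleGraph W), C V G →
          DepthMinorRealization r G H →
          avgDeg H ≤ c₁ * ((r : ℝ) + 1) ^ (1 / δ) *
            ((1 / δ) * Real.logb 2 ((r : ℝ) + 3)) ^ (c₂ / δ) := by 
  have ht : 0 < (4/3 : ℝ) ^ δ - 1 := by
    have := Real.one_lt_rpow (by norm_num : (1:ℝ) < 4/3) hδ0
    linarith
  set M : ℝ := 2 * C₀ / ((4/3 : ℝ) ^ δ - 1) with hMdef
  have hM : 0 < M := by positivity
  have hMC : 2 * C₀ ≤ M * ((4/3 : ℝ) ^ δ - 1) := by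
    rw [hMdef, div_mul_cancel₀ _ ht.ne']
  set B : ℝ := 588 * M + 12 * C₀ + 1 with hB
  have hB1 : 1 ≤ B := by rw [hB]; linarith
  obtain ⟨c, hc0, hc⟩ := analysis_bound B δ hB1 hδ0 hδ1
  refine ⟨c, 5, hc0, by norm_num, ?_⟩
  intro C hmono hsep r V W _ _ _ G H hG D
  by_cases hpos : 0 < avgDeg H
  swap
  · have hl : 0 ≤ Real.logb 2 ((r : ℝ) + 3) :=
      Real.logb_nonneg (by norm_num) (by have : (0:ℝ) ≤ r := by positivity
                                         linarith)
    refine (not_lt.mp hpos).trans ?_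
    positivity
  obtain ⟨X, lam, hlam, hXne, heq, hle, havg⟩ := extremal_exists H hpos
  refine havg.trans (hc X.card r hXne.card_pos ?_)
  by_contra hcon
  push Not at hcon
  have hL1 : (1:ℝ) ≤ ((Nat.log 2 X.card + 1 : ℕ) : ℝ) := by exact_mod_cast (by omega)
  set L : ℕ := Nat.log 2 X.card + 1 with hL
  have hr0 : (0:ℝ) ≤ r := by positivity
  have hL5 : (1:ℝ) ≤ (L:ℝ) ^ 5 := one_le_pow₀ hL1
  have hLr : (1:ℝ) ≤ (L:ℝ) ^ 5 * (r + 1) := by nlinarith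
  have hBL : B ≤ B * (L:ℝ) ^ 5 * (r + 1) := by
    rw [mul_assoc]; nlinarith
  have hk2 : 2 ≤ X.card := by
    by_contra hlt
    have h1 : X.card = 1 := by have := hXne.card_pos; omega
    rw [h1] at hcon
    have : (((1:ℕ):ℝ) / 2) ^ δ ≤ 1 := Real.rpow_le_one (by norm_num) (by norm_num) hδ0.le
    linarith
  refine core_contra G (H.comap (Subtype.val : X → W)) r (D.restrict X) C₀ δ ((X.card : ℝ) / 2) M
    hC₀ hδ0 hδ1 hM ?_ ?_ hMC (sep_of_class C₀ δ C hmono hsep V G hG) lam hlam X.card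
    (Fintype.card_coe X) hk2 L hL rfl ?_ ?_ ?_
  · linarith
  · linarith
  · rw [eCount_comap]
    have : (Finset.univ : Finset X).map (Function.Embedding.subtype _) = X := by
      ext v; simp
    rw [this]; exact heq
  · intro Y
    rw [eCount_comap]
    have := hle (Y.map (Function.Embedding.subtype _))
    rwa [Finset.card_map] at this
  · refine le_trans ?_ hcon.le
    have : 588 * M ≤ B := by linarith
    gcongr
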